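/- Let H be a Hilbert space and let G ∈ L(H) be a norm-attaining operator with ‖G‖ = 1. Let M_G := {x ∈ S_H : ‖Gx‖ = 1} and let E be the closed linear span of M_G. Then the following are equivalent: (i) sup{‖Gx‖ : x ∈ S_H ∩ E^⊥} < 1; (ii) for every ε > 0 there exists δ > 0 such that whenever x ∈ S_H and ‖Gx‖ > 1−δ, one has dist(x, E) < ε; (iii) for every T ∈ L(H), ‖T‖_G = sup_{x ∈ M_G} ‖Tx‖. -/

import Mathlib

open Filter Topology

variable {𝕜 : Type*} [RCLike 𝕜]

/-- The `G`-norm of an operator `T`: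
`‖T‖_G := inf_{δ>0} sup {‖Tx‖ : x ∈ S_H, ‖Gx‖ > 1 - δ}`. -/
noncomputable def Gnorm {H : Type*} [NormedAddCommGroup H] [InnerProductSpace 𝕜 H]
    (G T : H →L[𝕜] H) : ℝ :=
  ⨅ δ : {δ : ℝ // 0 < δ},
    sSup {r : ℝ | ∃ x : H, ‖x‖ = 1 ∧ 1 - (δ : ℝ) < ‖G x‖ ∧ r = ‖T x‖}

/-- The norm-attainment set `M_G := {x ∈ S_H : ‖Gx‖ = 1}` of a norm-one operator `G`. -/
def MGset {H : Type*} [NormedAddCommGroup H] [InnerProductSpace 𝕜 H]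
    (G : H →L[𝕜] H) : Set H :=
  {x : H | ‖x‖ = 1 ∧ ‖G x‖ = 1}

/-- `E`: the closed linear span of `M_G`. -/
noncomputable def Espan {H : Type*} [NormedAddCommGroup H] [InnerProductSpace 𝕜 H]
    (G : H →L[𝕜] H) : Submodule 𝕜 H :=
  (Submodule.span 𝕜 (MGset G)).topologicalClosure

/-!
Since `‖G‖ = 1`, the form `‖x‖² - ‖G x‖²` is positive semidefinite. Hence a vector whose norm `G`
preserves lies in its kernel, so `G` is isometric on `E` and maps `E` and `Eᗮ` to orthogonal
subspaces. Writing `x = p + q` with `p ∈ E` and `q ∈ Eᗮ`, this gives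
`‖x‖² - ‖G x‖² = ‖q‖² - ‖G q‖²`. If `‖G‖ < 1` on `Eᗮ`, almost attaining the norm therefore forces
`‖q‖ = dist(x, E)` to be small, and then `T x` is close to `T p`. Conversely, the `G`-norm of the
projection onto `Eᗮ` measures how far from `E` almost norm-attaining vectors can be.
-/

section Contraction

variable {V W : Type*} [NormedAddCommGroup V] [InnerProductSpace 𝕜 V]
  [NormedAddCommGroup W] [InnerProductSpace 𝕜 W] {A : V →L[𝕜] W}

theorem re_inner_map_map_of_norm_map_eq (hA : ‖A‖ ≤ 1) {x : V} (hx : ‖A x‖ = ‖x‖) (y : V) :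
    RCLike.re (inner 𝕜 (A x) (A y)) = RCLike.re (inner 𝕜 x y) := by
  set b := RCLike.re (inner 𝕜 x y) - RCLike.re (inner 𝕜 (A x) (A y)) with hb
  -- `‖·‖² - ‖A ·‖²` vanishes at `x`, so it is affine in `t` along `t • x + y`, with slope `2 * b`.
  have affine_nonneg (t : ℝ) : 0 ≤ ‖y‖ ^ 2 - ‖A y‖ ^ 2 + 2 * t * b := by
    have hle : ‖A ((t : 𝕜) • x + y)‖ ^ 2 ≤ ‖(t : 𝕜) • x + y‖ ^ 2 := by
      gcongr
      exact A.le_of_opNorm_le_of_le hA le_rfl |>.trans_eq (one_mul _)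
    simp only [map_add, map_smul, norm_add_sq (𝕜 := 𝕜), norm_smul, hx, inner_smul_left,
      RCLike.conj_ofReal, RCLike.re_ofReal_mul] at hle
    linarith [hb]
  by_contra hne
  have hb0 : b ≠ 0 := sub_ne_zero.mpr (Ne.symm hne)
  have h := affine_nonneg (-(‖y‖ ^ 2 - ‖A y‖ ^ 2 + 1) / (2 * b))
  field_simp at h
  linarith

theorem norm_map_add_sq_of_norm_map_eq (hA : ‖A‖ ≤ 1) {x : V} (hx : ‖A x‖ = ‖x‖) (y : V) :
    ‖A (x + y)‖ ^ 2 = ‖x‖ ^ 2 + 2 * RCLike.re (inner 𝕜 x y) + ‖A y‖ ^ 2 := by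
  rw [map_add, norm_add_sq (𝕜 := 𝕜), re_inner_map_map_of_norm_map_eq hA hx, hx]

/-- The subspace of all vectors whose norm is preserved by the contraction `A`. -/
def normPreservedSubmodule (A : V →L[𝕜] W) (hA : ‖A‖ ≤ 1) : Submodule 𝕜 V where
  carrier := {x | ‖A x‖ = ‖x‖}
  zero_mem' := by simp
  add_mem' {x y} (hx : ‖A x‖ = ‖x‖) (hy : ‖A y‖ = ‖y‖) := by
    have hsq : ‖A (x + y)‖ ^ 2 = ‖x + y‖ ^ 2 := by
      rw [norm_map_add_sq_of_norm_map_eq hA hx, hy, norm_add_sq (𝕜 := 𝕜)]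
    exact (sq_eq_sq₀ (norm_nonneg _) (norm_nonneg _)).mp hsq
  smul_mem' c x (hx : ‖A x‖ = ‖x‖) := by
    change ‖A (c • x)‖ = ‖c • x‖
    rw [map_smul, norm_smul, norm_smul, hx]

theorem isClosed_normPreservedSubmodule (hA : ‖A‖ ≤ 1) :
    IsClosed (normPreservedSubmodule A hA : Set V) :=
  isClosed_eq A.continuous.norm continuous_norm

end Contraction

section Restriction

variable {V W : Type*} [NormedAddCommGroup V] [NormedSpace 𝕜 V]
  [NormedAddCommGroup W] [NormedSpace 𝕜 W]

theorem sSup_norm_unit_eq_norm_comp_subtypeL (T : V →L[𝕜] W) (K : Submodule 𝕜 V) :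
    sSup {r : ℝ | ∃ x : V, ‖x‖ = 1 ∧ x ∈ K ∧ r = ‖T x‖} = ‖T ∘L K.subtypeL‖ := by
  rw [← ContinuousLinearMap.sSup_sphere_eq_norm]
  congr 1
  ext r
  simp [eq_comm, and_left_comm]

theorem norm_apply_le_norm_comp_subtypeL_mul_norm (T : V →L[𝕜] W) {K : Submodule 𝕜 V} {x : V}
    (hx : x ∈ K) : ‖T x‖ ≤ ‖T ∘L K.subtypeL‖ * ‖x‖ :=
  (T ∘L K.subtypeL).le_opNorm ⟨x, hx⟩

end Restriction

section Subspace

variable {V : Type*} [NormedAddCommGroup V] [InnerProductSpace 𝕜 V]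

theorem infDist_eq_norm_starProjection_orthogonal (K : Submodule 𝕜 V) [K.HasOrthogonalProjection]
    (x : V) : Metric.infDist x (K : Set V) = ‖Kᗮ.starProjection x‖ := by
  rw [K.starProjection_orthogonal_val, K.starProjection_minimal, Metric.infDist_eq_iInf]
  simp only [dist_eq_norm]
  rfl

theorem starProjection_orthogonal_comp_subtypeL (K : Submodule 𝕜 V)
    [K.HasOrthogonalProjection] : Kᗮ.starProjection ∘L K.subtypeL = 0 := by
  ext x
  exact (Submodule.starProjection_apply_eq_zero_iff Kᗮ).mpr (K.le_orthogonal_orthogonal x.2)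

theorem norm_apply_le_add_infDist {W : Type*} [NormedAddCommGroup W] [NormedSpace 𝕜 W]
    (T : V →L[𝕜] W) (K : Submodule 𝕜 V) [K.HasOrthogonalProjection] (x : V) :
    ‖T x‖ ≤ ‖T ∘L K.subtypeL‖ * ‖x‖ + ‖T‖ * Metric.infDist x (K : Set V) :=
  calc ‖T x‖ = ‖T (K.starProjection x) + T (Kᗮ.starProjection x)‖ := by
        rw [← map_add, K.starProjection_add_starProjection_orthogonal]
    _ ≤ ‖T (K.starProjection x)‖ + ‖T (Kᗮ.starProjection x)‖ := norm_add_le _ _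
    _ ≤ ‖T ∘L K.subtypeL‖ * ‖K.starProjection x‖ + ‖T‖ * ‖Kᗮ.starProjection x‖ := by
        gcongr
        · exact norm_apply_le_norm_comp_subtypeL_mul_norm T (K.starProjection_apply_mem x)
        · exact T.le_opNorm _
    _ ≤ ‖T ∘L K.subtypeL‖ * ‖x‖ + ‖T‖ * Metric.infDist x (K : Set V) := by
        rw [infDist_eq_norm_starProjection_orthogonal]
        gcongr
        exact K.norm_starProjection_apply_le x

theorem norm_comp_subtypeL_orthogonal_lt_one {W : Type*} [NormedAddCommGroup W]
    [NormedSpace 𝕜 W] {A : V →L[𝕜] W} {K : Submodule 𝕜 V} [K.HasOrthogonalProjection] {δ : ℝ}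
    (hδ : 0 < δ)
    (h : ∀ x : V, ‖x‖ = 1 → 1 - δ < ‖A x‖ → Metric.infDist x (K : Set V) < 1) :
    ‖A ∘L Kᗮ.subtypeL‖ < 1 := by
  rw [← sSup_norm_unit_eq_norm_comp_subtypeL]
  refine (Real.sSup_le ?_ (le_max_right (1 - δ) 0)).trans_lt (max_lt (by linarith) one_pos)
  rintro _ ⟨x, hx, hxK, rfl⟩
  refine le_max_of_le_left (not_lt.mp fun hAx => (h x hx hAx).ne ?_)
  rw [infDist_eq_norm_starProjection_orthogonal, Submodule.starProjection_eq_self_iff.mpr hxK, hx]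

variable {W : Type*} [NormedAddCommGroup W] [InnerProductSpace 𝕜 W] {A : V →L[𝕜] W}
  {K : Submodule 𝕜 V} [K.HasOrthogonalProjection]

theorem one_sub_sq_mul_infDist_sq_le (hA : ‖A‖ ≤ 1) (hK : K ≤ normPreservedSubmodule A hA)
    (x : V) :
    (1 - ‖A ∘L Kᗮ.subtypeL‖ ^ 2) * Metric.infDist x (K : Set V) ^ 2 ≤ ‖x‖ ^ 2 - ‖A x‖ ^ 2 := by
  set p := K.starProjection x
  set q := Kᗮ.starProjection x
  have hp : p ∈ K := K.starProjection_apply_mem x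
  have hq : q ∈ Kᗮ := Kᗮ.starProjection_apply_mem x
  have norm_map_sq : ‖A x‖ ^ 2 = ‖p‖ ^ 2 + ‖A q‖ ^ 2 := by
    rw [← K.starProjection_add_starProjection_orthogonal x,
      norm_map_add_sq_of_norm_map_eq hA (hK hp), hq p hp, map_zero, mul_zero, add_zero]
  have norm_map_q_sq : ‖A q‖ ^ 2 ≤ ‖A ∘L Kᗮ.subtypeL‖ ^ 2 * ‖q‖ ^ 2 := by
    rw [← mul_pow]
    gcongr
    exact norm_apply_le_norm_comp_subtypeL_mul_norm A hq
  rw [infDist_eq_norm_starProjection_orthogonal, K.norm_sq_eq_add_norm_sq_starProjection x]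
  linarith

theorem exists_forall_infDist_lt_of_norm_comp_subtypeL_lt_one (hA : ‖A‖ ≤ 1)
    (hK : K ≤ normPreservedSubmodule A hA) (hlt : ‖A ∘L Kᗮ.subtypeL‖ < 1) {ε : ℝ} (hε : 0 < ε) :
    ∃ δ > (0 : ℝ), ∀ x : V, ‖x‖ = 1 → 1 - δ < ‖A x‖ → Metric.infDist x (K : Set V) < ε := by
  set c := 1 - ‖A ∘L Kᗮ.subtypeL‖ ^ 2
  have hc : 0 < c := sub_pos.mpr (pow_lt_one₀ (norm_nonneg _) hlt two_ne_zero)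
  refine ⟨c * ε ^ 2 / 2, by positivity, fun x hx hAx => ?_⟩
  have hsq : c * Metric.infDist x (K : Set V) ^ 2 < c * ε ^ 2 :=
    calc c * Metric.infDist x (K : Set V) ^ 2 ≤ 1 - ‖A x‖ ^ 2 := by
          simpa only [hx, one_pow] using one_sub_sq_mul_infDist_sq_le hA hK x
      _ ≤ 2 * (1 - ‖A x‖) := by linarith [sq_nonneg (1 - ‖A x‖)]
      _ < c * ε ^ 2 := by linarith
  exact lt_of_pow_lt_pow_left₀ 2 hε.le (lt_of_mul_lt_mul_left hsq hc.le)

end Subspace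

section GNorm

variable {H : Type*} [NormedAddCommGroup H] [InnerProductSpace 𝕜 H] {G T : H →L[𝕜] H}

theorem Gnorm_nonneg : 0 ≤ Gnorm G T :=
  Real.iInf_nonneg fun _ => Real.sSup_nonneg (by rintro _ ⟨x, -, -, rfl⟩; exact norm_nonneg _)

theorem Gnorm_le_of_forall {δ C : ℝ} (hδ : 0 < δ) (hC : 0 ≤ C)
    (h : ∀ x : H, ‖x‖ = 1 → 1 - δ < ‖G x‖ → ‖T x‖ ≤ C) : Gnorm G T ≤ C := by
  have hbdd : BddBelow (Set.range fun δ : {δ : ℝ // 0 < δ} =>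
      sSup {r : ℝ | ∃ x : H, ‖x‖ = 1 ∧ 1 - (δ : ℝ) < ‖G x‖ ∧ r = ‖T x‖}) := by
    refine ⟨0, ?_⟩
    rintro _ ⟨_, rfl⟩
    exact Real.sSup_nonneg (by rintro _ ⟨x, -, -, rfl⟩; exact norm_nonneg _)
  refine (ciInf_le hbdd ⟨δ, hδ⟩).trans (Real.sSup_le ?_ hC)
  rintro _ ⟨x, hx, hGx, rfl⟩
  exact h x hx hGx

theorem exists_forall_norm_lt_of_Gnorm_lt {C : ℝ} (h : Gnorm G T < C) :
    ∃ δ > (0 : ℝ), ∀ x : H, ‖x‖ = 1 → 1 - δ < ‖G x‖ → ‖T x‖ < C := by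
  have : Nonempty {δ : ℝ // 0 < δ} := ⟨⟨1, one_pos⟩⟩
  obtain ⟨⟨δ, hδ⟩, hlt⟩ := exists_lt_of_ciInf_lt h
  have hbdd : BddAbove {r : ℝ | ∃ x : H, ‖x‖ = 1 ∧ 1 - δ < ‖G x‖ ∧ r = ‖T x‖} := by
    refine ⟨‖T‖, ?_⟩
    rintro _ ⟨x, hx, -, rfl⟩
    exact T.unit_le_opNorm x hx.le
  exact ⟨δ, hδ, fun x hx hGx => (le_csSup hbdd ⟨x, hx, hGx, rfl⟩).trans_lt hlt⟩

theorem norm_apply_le_Gnorm_of_mem_MGset {x : H} (hx : x ∈ MGset G) : ‖T x‖ ≤ Gnorm G T := by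
  refine le_of_forall_gt fun C hC => ?_
  obtain ⟨δ, hδ, h⟩ := exists_forall_norm_lt_of_Gnorm_lt hC
  exact h x hx.1 (by linarith [hx.2])

theorem sSup_MGset_le_Gnorm : sSup {r : ℝ | ∃ x ∈ MGset G, r = ‖T x‖} ≤ Gnorm G T := by
  refine Real.sSup_le ?_ Gnorm_nonneg
  rintro _ ⟨x, hx, rfl⟩
  exact norm_apply_le_Gnorm_of_mem_MGset hx

theorem Espan_le_normPreservedSubmodule (hG : ‖G‖ ≤ 1) : Espan G ≤ normPreservedSubmodule G hG :=
  Submodule.topologicalClosure_minimal _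
    (Submodule.span_le.mpr fun _ hx => hx.2.trans hx.1.symm) (isClosed_normPreservedSubmodule hG)

theorem mem_MGset_iff_mem_Espan (hG : ‖G‖ ≤ 1) {x : H} :
    x ∈ MGset G ↔ ‖x‖ = 1 ∧ x ∈ Espan G :=
  ⟨fun hx => ⟨hx.1, Submodule.le_topologicalClosure _ (Submodule.subset_span hx)⟩,
    fun ⟨hx, hxE⟩ => ⟨hx, (Espan_le_normPreservedSubmodule hG hxE).trans hx⟩⟩

theorem sSup_MGset_eq_norm_comp_subtypeL (hG : ‖G‖ ≤ 1) (T : H →L[𝕜] H) :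
    sSup {r : ℝ | ∃ x ∈ MGset G, r = ‖T x‖} = ‖T ∘L (Espan G).subtypeL‖ := by
  simp only [← sSup_norm_unit_eq_norm_comp_subtypeL, mem_MGset_iff_mem_Espan hG, and_assoc]

variable {K : Submodule 𝕜 H} [K.HasOrthogonalProjection]

theorem Gnorm_le_norm_comp_subtypeL
    (h : ∀ ε > (0 : ℝ), ∃ δ > (0 : ℝ), ∀ x : H, ‖x‖ = 1 → 1 - δ < ‖G x‖ →
      Metric.infDist x (K : Set H) < ε) (T : H →L[𝕜] H) :
    Gnorm G T ≤ ‖T ∘L K.subtypeL‖ := by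
  refine le_of_forall_pos_le_add fun η hη => ?_
  obtain ⟨δ, hδ, hdist⟩ := h (η / (‖T‖ + 1)) (by positivity)
  refine Gnorm_le_of_forall hδ (by positivity) fun x hx hGx => ?_
  calc ‖T x‖ ≤ ‖T ∘L K.subtypeL‖ * ‖x‖ + ‖T‖ * Metric.infDist x (K : Set H) :=
        norm_apply_le_add_infDist T K x
    _ ≤ ‖T ∘L K.subtypeL‖ * 1 + (‖T‖ + 1) * (η / (‖T‖ + 1)) := by
        have := Metric.infDist_nonneg (x := x) (s := (K : Set H))
        gcongr
        · exact hx.le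
        · exact le_add_of_nonneg_right zero_le_one
        · exact (hdist x hx hGx).le
    _ = ‖T ∘L K.subtypeL‖ + η := by field_simp

theorem exists_forall_infDist_lt_of_Gnorm_starProjection_lt {ε : ℝ}
    (h : Gnorm G Kᗮ.starProjection < ε) :
    ∃ δ > (0 : ℝ), ∀ x : H, ‖x‖ = 1 → 1 - δ < ‖G x‖ → Metric.infDist x (K : Set H) < ε := by
  simpa only [infDist_eq_norm_starProjection_orthogonal] using exists_forall_norm_lt_of_Gnorm_lt h

end GNorm

theorem stmt_18_general {H : Type*} [NormedAddCommGroup H] [InnerProductSpace 𝕜 H]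
    (G : H →L[𝕜] H) (hG : ‖G‖ = 1) [(Espan G).HasOrthogonalProjection] :
    List.TFAE
      [sSup {r : ℝ | ∃ x : H, ‖x‖ = 1 ∧ x ∈ (Espan G)ᗮ ∧ r = ‖G x‖} < 1,
       ∀ ε > (0 : ℝ), ∃ δ > (0 : ℝ), ∀ x : H, ‖x‖ = 1 → 1 - δ < ‖G x‖ →
         Metric.infDist x (Espan G : Set H) < ε,
       ∀ T : H →L[𝕜] H, Gnorm G T = sSup {r : ℝ | ∃ x ∈ MGset G, r = ‖T x‖}] := by
  tfae_have 1 → 2 := fun hlt ε hε => by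
    rw [sSup_norm_unit_eq_norm_comp_subtypeL] at hlt
    exact exists_forall_infDist_lt_of_norm_comp_subtypeL_lt_one hG.le
      (Espan_le_normPreservedSubmodule hG.le) hlt hε
  tfae_have 2 → 1 := fun hdist => by
    obtain ⟨δ, hδ, h⟩ := hdist 1 one_pos
    rw [sSup_norm_unit_eq_norm_comp_subtypeL]
    exact norm_comp_subtypeL_orthogonal_lt_one hδ h
  tfae_have 2 → 3 := fun hdist T => by
    refine le_antisymm ?_ sSup_MGset_le_Gnorm
    rw [sSup_MGset_eq_norm_comp_subtypeL hG.le]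
    exact Gnorm_le_norm_comp_subtypeL hdist T
  tfae_have 3 → 2 := fun hnorm ε hε => by
    refine exists_forall_infDist_lt_of_Gnorm_starProjection_lt ?_
    rwa [hnorm, sSup_MGset_eq_norm_comp_subtypeL hG.le,
      starProjection_orthogonal_comp_subtypeL, norm_zero]
  tfae_finish

/-- For a Hilbert space `H` and a norm-attaining norm-one `G ∈ L(H)`, with
`E = closed span of M_G`, the following are equivalent:
(i) `sup {‖Gx‖ : x ∈ S_H ∩ E^⊥} < 1`;
(ii) for every `ε > 0` there is `δ > 0` such that `x ∈ S_H`, `‖Gx‖ > 1 - δ` imply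
`dist(x, E) < ε`;
(iii) for every `T ∈ L(H)`, `‖T‖_G = sup_{x ∈ M_G} ‖Tx‖`. -/
theorem stmt_18 {H : Type*} [NormedAddCommGroup H] [InnerProductSpace 𝕜 H]
    [CompleteSpace H]
    (G : H →L[𝕜] H) (hG : ‖G‖ = 1) (hatt : ∃ x : H, ‖x‖ = 1 ∧ ‖G x‖ = 1) :
    List.TFAE
      [sSup {r : ℝ | ∃ x : H, ‖x‖ = 1 ∧ x ∈ (Espan G)ᗮ ∧ r = ‖G x‖} < 1,
       ∀ ε > (0 : ℝ), ∃ δ > (0 : ℝ), ∀ x : H, ‖x‖ = 1 → 1 - δ < ‖G x‖ →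
         Metric.infDist x (Espan G : Set H) < ε,
       ∀ T : H →L[𝕜] H, Gnorm G T = sSup {r : ℝ | ∃ x ∈ MGset G, r = ‖T x‖}] := by
  have : CompleteSpace (Espan G) :=
    (Submodule.isClosed_topologicalClosure _).completeSpace_coe
  exact stmt_18_general G hG
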